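/- If U is a universe, then * = {0|0} is U-invertible if and only if U contains no Left end that is a starkiller. -/

import Mathlib

/-- Augmented (misère) game forms: finitely many Left and Right options,
    possibly adorned with a Left and/or Right tombstone marker. -/
inductive Aug : Type
  | mk (m n : ℕ) (L : Fin m → Aug) (R : Fin n → Aug) (tl tr : Bool) : Aug

namespace Aug

def numL : Aug → ℕ
  | mk m _ _ _ _ _ => m

def numR : Aug → ℕ
  | mk _ n _ _ _ _ => n

def moveL : (G : Aug) → Fin G.numL → Aug
  | mk _ _ L _ _ _ => L

def moveR : (G : Aug) → Fin G.numR → Aug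
  | mk _ _ _ R _ _ => R

def tombL : Aug → Bool
  | mk _ _ _ _ t _ => t

def tombR : Aug → Bool
  | mk _ _ _ _ _ t => t

instance : Zero Aug := ⟨mk 0 0 Fin.elim0 Fin.elim0 false false⟩

/-- Disjunctive sum of augmented forms (tombstones propagate to the sum). -/
protected noncomputable def add : Aug → Aug → Aug := by
  intro x
  induction x with
  | mk m n L R tl tr IHL IHR =>
    intro y
    induction y with
    | mk m' n' L' R' tl' tr' IHL' IHR' =>
      exact mk (m + m') (n + n')
        (Fin.addCases (motive := fun _ => Aug)
          (fun i => IHL i (mk m' n' L' R' tl' tr')) (fun j => IHL' j))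
        (Fin.addCases (motive := fun _ => Aug)
          (fun i => IHR i (mk m' n' L' R' tl' tr')) (fun j => IHR' j))
        (tl || tl') (tr || tr')

noncomputable instance : Add Aug := ⟨Aug.add⟩

/-- Conjugate: swap Left and Right throughout. -/
noncomputable def conj : Aug → Aug := by
  intro G
  induction G with
  | mk m n L R tl tr IHL IHR => exact mk n m IHR IHL tr tl

/-- A genuine game form: no tombstones anywhere. -/
def IsGame : Aug → Prop := by
  intro G
  induction G with
  | mk m n L R tl tr IHL IHR =>
    exact tl = false ∧ tr = false ∧ (∀ i, IHL i) ∧ (∀ j, IHR j)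

/-- Formal birthday (tombstones contribute nothing). -/
noncomputable def birthday : Aug → ℕ := by
  intro G
  induction G with
  | mk m n L R _ _ IHL IHR =>
    exact max (Finset.univ.sup fun i => IHL i + 1) (Finset.univ.sup fun j => IHR j + 1)

/-- `winsF G true` : Left, moving first, wins `G` in misère play
    (a Left end-like position is a first-player win for Left).
    `winsF G false` : Right, moving first, wins `G`. -/
def winsF : Aug → Bool → Prop := by
  intro G
  induction G with
  | mk m n L R tl tr IHL IHR =>
    intro b
    exact match b with
      | true => tl = true ∨ m = 0 ∨ ∃ i, ¬ IHL i false
      | false => tr = true ∨ n = 0 ∨ ∃ j, ¬ IHR j true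

/-- Left outcome is `L`. -/
def oL (G : Aug) : Prop := winsF G true

/-- Right outcome is `L` (Left, moving second, wins). -/
def oR (G : Aug) : Prop := ¬ winsF G false

/-- `outcome G ≥ outcome H` in the misère partial order of outcomes
    (Left prefers larger). -/
def outGe (G H : Aug) : Prop := (oL H → oL G) ∧ (oR H → oR G)

/-- `outcome G = outcome H`. -/
def outEq (G H : Aug) : Prop := (oL G ↔ oL H) ∧ (oR G ↔ oR H)

/-- `G ≥_A H`. -/
def geA (A : Set Aug) (G H : Aug) : Prop := ∀ X ∈ A, outGe (G + X) (H + X)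

/-- `G ≡_A H`. -/
def equivA (A : Set Aug) (G H : Aug) : Prop := ∀ X ∈ A, outEq (G + X) (H + X)

def LeftEnd (G : Aug) : Prop := G.numL = 0
def RightEnd (G : Aug) : Prop := G.numR = 0
def LeftEndLike (G : Aug) : Prop := G.tombL = true ∨ G.numL = 0
def RightEndLike (G : Aug) : Prop := G.tombR = true ∨ G.numR = 0

/-- `G` is Left `A`-strong. -/
def LeftStrong (A : Set Aug) (G : Aug) : Prop :=
  ∀ X ∈ A, LeftEnd X → winsF (G + X) true

/-- `G` is Right `A`-strong. -/
def RightStrong (A : Set Aug) (G : Aug) : Prop :=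
  ∀ X ∈ A, RightEnd X → winsF (G + X) false

/-- Hereditarily closed set of games. -/
def Hereditary (A : Set Aug) : Prop :=
  ∀ G ∈ A, (∀ i, G.moveL i ∈ A) ∧ (∀ j, G.moveR j ∈ A)

/-- An (absolute) universe of misère games. -/
structure IsUniverse (U : Set Aug) : Prop where
  games : ∀ G ∈ U, IsGame G
  zero_mem : (0 : Aug) ∈ U
  add_mem : ∀ G ∈ U, ∀ H ∈ U, G + H ∈ U
  conj_mem : ∀ G ∈ U, conj G ∈ U
  moveL_mem : ∀ G ∈ U, ∀ i, G.moveL i ∈ U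
  moveR_mem : ∀ G ∈ U, ∀ j, G.moveR j ∈ U
  dicotic : ∀ (m n : ℕ) (L : Fin m → Aug) (R : Fin n → Aug), 0 < m → 0 < n →
    (∀ i, L i ∈ U) → (∀ j, R j ∈ U) → mk m n L R false false ∈ U

/-- `Û`: the augmented forms admitting a `U`-expansion, i.e. equivalent
    modulo `U` to some member of `U`. -/
def hatU (U : Set Aug) : Set Aug := {G | ∃ G' ∈ U, equivA U G G'}

/-- `G` is `A`-invertible (with inverse in `A`). -/
def Invertible (A : Set Aug) (G : Aug) : Prop := ∃ H ∈ A, equivA A (G + H) 0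

/-- `G` is `U`-invertible with inverse in `Û`. -/
def InvertibleHat (U : Set Aug) (G : Aug) : Prop := ∃ H ∈ hatU U, equivA U (G + H) 0

/-- `G` is conjugate `A`-invertible. -/
def ConjInvertible (A : Set Aug) (G : Aug) : Prop :=
  conj G ∈ A ∧ equivA A (G + conj G) 0

/-- `A` is a monoid of games: a set of games containing `0`, closed under
    disjunctive sum, on which `≡_A` is a congruence. -/
structure IsMonoidOfGames (A : Set Aug) : Prop where
  games : ∀ G ∈ A, IsGame G
  zero_mem : (0 : Aug) ∈ A
  add_mem : ∀ G ∈ A, ∀ H ∈ A, G + H ∈ A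
  congr : ∀ G ∈ A, ∀ H ∈ A, ∀ J ∈ A, equivA A G H → equivA A (G + J) (H + J)

/-- `U`-simplest form: hereditarily, no dominated options, no reversible
    options, and no unnecessary tombstones. -/
def Simplest (U : Set Aug) : Aug → Prop := by
  intro G
  induction G with
  | mk m n L R tl tr IHL IHR =>
    exact
      (∀ i i' : Fin m, geA U (L i) (L i') → i = i') ∧
      (∀ j j' : Fin n, geA U (R j) (R j') → j = j') ∧
      (∀ i : Fin m, ∀ jj : Fin (L i).numR, ¬ geA U (mk m n L R tl tr) ((L i).moveR jj)) ∧
      (∀ j : Fin n, ∀ ii : Fin (R j).numL, ¬ geA U ((R j).moveL ii) (mk m n L R tl tr)) ∧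
      (tl = true → ¬ equivA U (mk m n L R tl tr) (mk m n L R false tr)) ∧
      (tr = true → ¬ equivA U (mk m n L R tl tr) (mk m n L R tl false)) ∧
      (∀ i, IHL i) ∧ (∀ j, IHR j)

lemma birthday_mk (m n : ℕ) (L : Fin m → Aug) (R : Fin n → Aug) (tl tr : Bool) :
    birthday (mk m n L R tl tr) =
      max (Finset.univ.sup fun i => birthday (L i) + 1)
          (Finset.univ.sup fun j => birthday (R j) + 1) := rfl

lemma birthday_moveL_lt : ∀ (G : Aug) (i : Fin G.numL), birthday (G.moveL i) < birthday G := by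
  intro G
  cases G with
  | mk m n L R tl tr =>
    intro i
    show birthday (L i) < birthday (mk m n L R tl tr)
    rw [birthday_mk]
    have h1 : birthday (L i) + 1 ≤ Finset.univ.sup (fun i => birthday (L i) + 1) :=
      Finset.le_sup (f := fun i => birthday (L i) + 1) (Finset.mem_univ i)
    exact lt_of_lt_of_le (Nat.lt_succ_self _) (h1.trans (le_max_left _ _))

lemma birthday_moveR_lt : ∀ (G : Aug) (j : Fin G.numR), birthday (G.moveR j) < birthday G := by
  intro G
  cases G with
  | mk m n L R tl tr =>
    intro j
    show birthday (R j) < birthday (mk m n L R tl tr)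
    rw [birthday_mk]
    have h1 : birthday (R j) + 1 ≤ Finset.univ.sup (fun j => birthday (R j) + 1) :=
      Finset.le_sup (f := fun j => birthday (R j) + 1) (Finset.mem_univ j)
    exact lt_of_lt_of_le (Nat.lt_succ_self _) (h1.trans (le_max_right _ _))

/-- A disintegrator. -/
def Disintegrator (G : Aug) : Prop :=
  ∃ j : Fin G.numR, (G.moveR j).numL ≠ 0 ∧
    ∀ i : Fin (G.moveR j).numL,
      ¬ winsF ((G.moveR j).moveL i) true ∨ Disintegrator ((G.moveR j).moveL i)
termination_by birthday G
decreasing_by exact lt_trans (birthday_moveL_lt _ _) (birthday_moveR_lt _ _)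

/-- A starkiller. -/
def Starkiller (G : Aug) : Prop :=
  ∃ j : Fin G.numR, winsF (G.moveR j) false ∧
    ∀ i : Fin (G.moveR j).numL,
      ¬ winsF ((G.moveR j).moveL i) true ∨ Starkiller ((G.moveR j).moveL i)
termination_by birthday G
decreasing_by exact lt_trans (birthday_moveL_lt _ _) (birthday_moveR_lt _ _)

def one : Aug := mk 1 0 (fun _ => 0) Fin.elim0 false false
def two : Aug := mk 1 0 (fun _ => one) Fin.elim0 false false
def star : Aug := mk 1 1 (fun _ => 0) (fun _ => 0) false false
/-- `conjugate(1) = {·|0}`. -/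
def oneConj : Aug := mk 0 1 Fin.elim0 (fun _ => 0) false false
/-- `{·|2}`. -/
def endTwo : Aug := mk 0 1 Fin.elim0 (fun _ => two) false false

/-- `n` copies of `G` summed. -/
noncomputable def nCopies : ℕ → Aug → Aug
  | 0, _ => 0
  | n + 1, G => nCopies n G + G

/-- Dicot: every subposition has both or neither kind of option. -/
def Dicot : Aug → Prop := by
  intro G
  induction G with
  | mk m n L R _ _ IHL IHR => exact (m = 0 ↔ n = 0) ∧ (∀ i, IHL i) ∧ (∀ j, IHR j)

/-- Hereditarily a Left end. -/
def LeftEndHered : Aug → Prop := by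
  intro G
  induction G with
  | mk m n L R _ _ IHL IHR => exact m = 0 ∧ (∀ j, IHR j)

/-- Hereditarily a Right end. -/
def RightEndHered : Aug → Prop := by
  intro G
  induction G with
  | mk m n L R _ _ IHL IHR => exact n = 0 ∧ (∀ i, IHL i)

/-- Dead-ending: once a player has no move in a subposition, that player
    never again has a move. -/
def DeadEnding : Aug → Prop := by
  intro G
  induction G with
  | mk m n L R tl tr IHL IHR =>
    exact (m = 0 → LeftEndHered (mk m n L R tl tr)) ∧
      (n = 0 → RightEndHered (mk m n L R tl tr)) ∧
      (∀ i, IHL i) ∧ (∀ j, IHR j)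

/-- Left weak set of games. -/
def LeftWeak (A : Set Aug) : Prop := ∀ G : Aug, LeftStrong A G ↔ LeftEndLike G

/-- Right weak set of games. -/
def RightWeak (A : Set Aug) : Prop := ∀ G : Aug, RightStrong A G ↔ RightEndLike G

end Aug

/-!
For a Left end `X`, every Left move from `* + * + X` leads to `* + X`, which Left, moving second,
wins exactly when `X` is not a starkiller. So the condition on starkillers says that `* + *` is Left
`U`-strong, and this is the only nontrivial hypothesis of the comparison test for `* + * ≥ 0`; the
inequality `* + * ≤ 0` is its conjugate.

Conversely, suppose `* + H ≡ 0`. If no Left end `K` satisfies `* + K ≤ 0`, the maintenance property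
gives `H ≤ *` by induction, so `* + * ≥ * + H ≥ 0` is Left `U`-strong. Such a `K` cannot exist:
it would satisfy `H ≤ conj K`, and Right would win `* + H + K` moving second although Left wins `K`
moving first.
-/

namespace Aug

section Options

/-- The options of one player, with the encoding of players used by `winsF`: `true` stands for
Left and `false` for Right. -/
def options (G : Aug) : Bool → Set Aug
  | true => Set.range G.moveL
  | false => Set.range G.moveR

/-- The tombstone of one player, with the same encoding of players as `options`. -/
def tomb (G : Aug) : Bool → Bool
  | true => G.tombL
  | false => G.tombR

lemma options_induction {P : Aug → Prop}
    (ind : ∀ G, (∀ p, ∀ x ∈ G.options p, P x) → P G) (G : Aug) : P G := by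
  induction G with
  | mk m n L R tl tr ihL ihR =>
    refine ind _ fun p => ?_
    cases p
    · exact Set.forall_mem_range.2 ihR
    · exact Set.forall_mem_range.2 ihL

lemma birthday_lt_of_mem_options {G x : Aug} {p : Bool} (hx : x ∈ G.options p) :
    birthday x < birthday G := by
  cases p
  · obtain ⟨j, rfl⟩ := hx
    exact birthday_moveR_lt G j
  · obtain ⟨i, rfl⟩ := hx
    exact birthday_moveL_lt G i

lemma options_finite (G : Aug) (p : Bool) : (G.options p).Finite := by
  cases p <;> exact Set.finite_range _

lemma options_eq_empty_iff (G : Aug) (p : Bool) :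
    G.options p = ∅ ↔ (bif p then G.numL else G.numR) = 0 := by
  cases p <;> simp [options, Set.range_eq_empty_iff, ← not_nonempty_iff, ← Fin.pos_iff_nonempty]

lemma leftEnd_iff {G : Aug} : LeftEnd G ↔ G.options true = ∅ :=
  (options_eq_empty_iff G true).symm

lemma rightEnd_iff {G : Aug} : RightEnd G ↔ G.options false = ∅ :=
  (options_eq_empty_iff G false).symm

@[simp] lemma options_zero (p : Bool) : options 0 p = ∅ := by
  cases p <;> exact (options_eq_empty_iff 0 _).2 rfl

@[simp] lemma options_star (p : Bool) : options star p = {0} := by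
  cases p <;> exact Set.range_const (ι := Fin 1)

lemma winsF_iff (G : Aug) (p : Bool) :
    winsF G p ↔ G.tomb p = true ∨ G.options p = ∅ ∨ ∃ x ∈ G.options p, ¬ winsF x (!p) := by
  rw [options_eq_empty_iff]
  cases G
  cases p <;> simp only [options, Set.exists_range_iff] <;> rfl

end Options

section Sum

lemma mk_add_mk (m n L R tl tr m' n' L' R' tl' tr') :
    (mk m n L R tl tr + mk m' n' L' R' tl' tr' : Aug) =
      mk (m + m') (n + n')
        (Fin.append (fun i => L i + mk m' n' L' R' tl' tr') (fun j => mk m n L R tl tr + L' j))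
        (Fin.append (fun i => R i + mk m' n' L' R' tl' tr') (fun j => mk m n L R tl tr + R' j))
        (tl || tl') (tr || tr') := rfl

lemma apply_append {α β : Type*} {m n : ℕ} (f : α → β) (a : Fin m → α) (b : Fin n → α) :
    (fun i => f (Fin.append a b i)) = Fin.append (fun i => f (a i)) (fun j => f (b j)) := by
  funext i
  refine Fin.addCases (fun i => ?_) (fun j => ?_) i <;> simp

lemma range_append {α : Type*} {m n : ℕ} (a : Fin m → α) (b : Fin n → α) :
    Set.range (Fin.append a b) = Set.range a ∪ Set.range b := by
  rw [← Set.Sum.elim_range, ← Fin.append_comp_sumElim]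
  exact (finSumFinEquiv.surjective.range_comp _).symm

lemma mk_eq_mk_of_cast {m n m' n' : ℕ} {L : Fin m → Aug} {R : Fin n → Aug} {L' : Fin m' → Aug}
    {R' : Fin n' → Aug} {tl tr : Bool} (hm : m = m') (hn : n = n') (hL : L = L' ∘ Fin.cast hm)
    (hR : R = R' ∘ Fin.cast hn) : mk m n L R tl tr = mk m' n' L' R' tl tr := by
  subst hm hn hL hR
  rfl

lemma tomb_add (G H : Aug) (p : Bool) : (G + H).tomb p = (G.tomb p || H.tomb p) := by
  cases G
  cases H
  cases p <;> rfl

lemma options_add (G H : Aug) (p : Bool) :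
    (G + H).options p = (· + H) '' G.options p ∪ (G + ·) '' H.options p := by
  cases G
  cases H
  cases p <;> simp only [options, ← Set.range_comp] <;> exact range_append _ _

lemma exists_mem_options_add {G H : Aug} {p : Bool} {P : Aug → Prop} :
    (∃ x ∈ (G + H).options p, P x) ↔
      (∃ g ∈ G.options p, P (g + H)) ∨ ∃ h ∈ H.options p, P (G + h) := by
  simp only [options_add, Set.mem_union, or_and_right, exists_or, Set.exists_mem_image]

lemma forall_mem_options_add {G H : Aug} {p : Bool} {P : Aug → Prop} :
    (∀ x ∈ (G + H).options p, P x) ↔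
      (∀ g ∈ G.options p, P (g + H)) ∧ ∀ h ∈ H.options p, P (G + h) := by
  simp only [options_add, Set.mem_union, or_imp, forall_and, Set.forall_mem_image]

lemma add_mem_options_left {G g : Aug} {p : Bool} (hg : g ∈ G.options p) (H : Aug) :
    g + H ∈ (G + H).options p := by
  rw [options_add]
  exact Or.inl ⟨g, hg, rfl⟩

lemma add_mem_options_right (G : Aug) {H h : Aug} {p : Bool} (hh : h ∈ H.options p) :
    G + h ∈ (G + H).options p := by
  rw [options_add]
  exact Or.inr ⟨h, hh, rfl⟩

lemma options_add_eq_empty_iff {G H : Aug} {p : Bool} :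
    (G + H).options p = ∅ ↔ G.options p = ∅ ∧ H.options p = ∅ := by
  rw [options_add, Set.union_empty_iff, Set.image_eq_empty, Set.image_eq_empty]

protected lemma zero_add (G : Aug) : 0 + G = G := by
  induction G with
  | mk m n L R tl tr ihL ihR =>
    change mk (0 + m) (0 + n) (Fin.append _ fun i => 0 + L i) (Fin.append _ fun j => 0 + R j)
      (false || tl) (false || tr) = _
    simp only [ihL, ihR, Bool.false_or]
    exact mk_eq_mk_of_cast (zero_add m) (zero_add n) (Fin.append_left_nil _ L rfl)
      (Fin.append_left_nil _ R rfl)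

protected lemma add_zero (G : Aug) : G + 0 = G := by
  induction G with
  | mk m n L R tl tr ihL ihR =>
    change mk (m + 0) (n + 0) (Fin.append (fun i => L i + 0) _) (Fin.append (fun j => R j + 0) _)
      (tl || false) (tr || false) = _
    simp only [ihL, ihR, Bool.or_false]
    exact mk_eq_mk_of_cast (add_zero m) (add_zero n) (Fin.append_right_nil L _ rfl)
      (Fin.append_right_nil R _ rfl)

protected lemma add_assoc (G H K : Aug) : G + H + K = G + (H + K) := by
  induction G generalizing H K with
  | mk m n L R tl tr ihL ihR =>
  induction H generalizing K with
  | mk m' n' L' R' tl' tr' ihL' ihR' =>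
  induction K with
  | mk m'' n'' L'' R'' tl'' tr'' ihL'' ihR'' =>
    simp only [mk_add_mk] at ihL ihR ihL' ihR' ihL'' ihR'' ⊢
    simp only [apply_append (· + mk m'' n'' L'' R'' tl'' tr''),
      apply_append (mk m n L R tl tr + ·), ihL, ihR, ihL', ihR', ihL'', ihR'', mk_add_mk,
      Bool.or_assoc]
    exact mk_eq_mk_of_cast (add_assoc m m' m'') (add_assoc n n' n'') (Fin.append_assoc _ _ _)
      (Fin.append_assoc _ _ _)

noncomputable instance : AddMonoid Aug where
  add_assoc := Aug.add_assoc
  zero_add := Aug.zero_add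
  add_zero := Aug.add_zero
  nsmul := nsmulRec

/-- Options are indexed, so `G + H` and `H + G` differ as forms: commutativity holds only for
outcomes, and in every context `X`. -/
lemma winsF_add_comm (G H X : Aug) (p : Bool) :
    winsF (G + H + X) p ↔ winsF (H + G + X) p := by
  induction G using options_induction generalizing H X p with
  | ind G ihG =>
  induction H using options_induction generalizing X p with
  | ind H ihH =>
  induction X using options_induction generalizing p with
  | ind X ihX =>
    have hG : (∃ g ∈ G.options p, ¬ winsF (g + H + X) (!p)) ↔
        ∃ g ∈ G.options p, ¬ winsF (H + g + X) (!p) :=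
      exists_congr fun g => and_congr_right fun hg => not_congr (ihG p g hg H X _)
    have hH : (∃ h ∈ H.options p, ¬ winsF (G + h + X) (!p)) ↔
        ∃ h ∈ H.options p, ¬ winsF (h + G + X) (!p) :=
      exists_congr fun h => and_congr_right fun hh => not_congr (ihH p h hh X _)
    have hX : (∃ x ∈ X.options p, ¬ winsF (G + H + x) (!p)) ↔
        ∃ x ∈ X.options p, ¬ winsF (H + G + x) (!p) :=
      exists_congr fun x => and_congr_right fun hx => not_congr (ihX p x hx _)
    rw [winsF_iff, winsF_iff (H + G + X)]
    simp only [tomb_add, options_add_eq_empty_iff, exists_mem_options_add, hG, hH, hX,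
      Bool.or_comm (G.tomb p), and_comm (a := G.options p = ∅),
      or_comm (a := ∃ g ∈ G.options p, _)]

end Sum

section Conj

lemma conj_mk (m n L R tl tr) : conj (mk m n L R tl tr) =
    mk n m (fun i => conj (R i)) (fun i => conj (L i)) tr tl := rfl

@[simp] lemma conj_conj (G : Aug) : conj (conj G) = G := by
  induction G with
  | mk m n L R tl tr ihL ihR => simp only [conj_mk, ihL, ihR]

@[simp] lemma conj_zero : conj 0 = 0 :=
  congrArg₂ (fun L R => mk 0 0 L R false false) (Subsingleton.elim _ _) (Subsingleton.elim _ _)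

@[simp] lemma conj_star : conj star = star := by
  simp only [star, conj_mk, conj_zero]

lemma conj_add (G H : Aug) : conj (G + H) = conj G + conj H := by
  induction G generalizing H with
  | mk m n L R tl tr ihL ihR =>
  induction H with
  | mk m' n' L' R' tl' tr' ihL' ihR' =>
    simp only [mk_add_mk, conj_mk, apply_append, ihL, ihR, ihL', ihR']

lemma winsF_conj (G : Aug) (p : Bool) : winsF (conj G) p ↔ winsF G !p := by
  induction G generalizing p with
  | mk m n L R tl tr ihL ihR =>
    cases p
    · change (tl = true ∨ m = 0 ∨ ∃ i, ¬ winsF (conj (L i)) true) ↔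
        (tl = true ∨ m = 0 ∨ ∃ i, ¬ winsF (L i) false)
      simp only [ihL, Bool.not_true]
    · change (tr = true ∨ n = 0 ∨ ∃ i, ¬ winsF (conj (R i)) false) ↔
        (tr = true ∨ n = 0 ∨ ∃ i, ¬ winsF (R i) true)
      simp only [ihR, Bool.not_false]

end Conj

section Outcomes

variable {G H x : Aug}

lemma isGame_iff :
    IsGame G ↔ (∀ p, G.tomb p = false) ∧ ∀ p, ∀ x ∈ G.options p, IsGame x := by
  cases G
  simp only [Bool.forall_bool, options, Set.forall_mem_range]
  exact ⟨fun ⟨hl, hr, hL, hR⟩ => ⟨⟨hr, hl⟩, hR, hL⟩, fun ⟨⟨hr, hl⟩, hR, hL⟩ => ⟨hl, hr, hL, hR⟩⟩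

lemma IsGame.of_mem_options {p : Bool} (hG : IsGame G) (hx : x ∈ G.options p) : IsGame x :=
  (isGame_iff.1 hG).2 p x hx

lemma isGame_zero : IsGame 0 :=
  ⟨rfl, rfl, Fin.rec0, Fin.rec0⟩

lemma isGame_star : IsGame star :=
  ⟨rfl, rfl, fun _ => isGame_zero, fun _ => isGame_zero⟩

lemma IsGame.add (hG : IsGame G) (hH : IsGame H) : IsGame (G + H) := by
  induction G using options_induction generalizing H with
  | ind G ihG =>
  induction H using options_induction with
  | ind H ihH =>
    refine isGame_iff.2 ⟨fun p => ?_, fun p => forall_mem_options_add.2 ⟨?_, ?_⟩⟩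
    · rw [tomb_add, (isGame_iff.1 hG).1, (isGame_iff.1 hH).1, Bool.or_false]
    · exact fun g hg => ihG p g hg (hG.of_mem_options hg) hH
    · exact fun h hh => ihH p h hh (hH.of_mem_options hh)

lemma LeftEnd.oL (hG : LeftEnd G) : oL G :=
  (winsF_iff G true).2 (Or.inr (Or.inl (leftEnd_iff.1 hG)))

lemma RightEnd.not_oR (hG : RightEnd G) : ¬ oR G :=
  not_not_intro ((winsF_iff G false).2 (Or.inr (Or.inl (rightEnd_iff.1 hG))))

lemma oL_of_mem_options (hx : x ∈ G.options true) (h : oR x) : oL G :=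
  (winsF_iff G true).2 (Or.inr (Or.inr ⟨x, hx, h⟩))

lemma oR.oL_of_mem_options (h : oR G) (hx : x ∈ G.options false) : oL x :=
  not_not.1 fun hL => h ((winsF_iff G false).2 (Or.inr (Or.inr ⟨x, hx, hL⟩)))

lemma oL_iff (hG : IsGame G) :
    oL G ↔ G.options true = ∅ ∨ ∃ x ∈ G.options true, oR x := by
  simp only [oL, oR, winsF_iff G, (isGame_iff.1 hG).1, Bool.not_true, Bool.false_eq_true,
    false_or]

lemma oR_iff (hG : IsGame G) :
    oR G ↔ (G.options false).Nonempty ∧ ∀ x ∈ G.options false, oL x := by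
  simp only [oL, oR, winsF_iff G, (isGame_iff.1 hG).1, Bool.not_false, Bool.false_eq_true,
    false_or, not_or, not_exists, not_and, not_not, Set.nonempty_iff_ne_empty, ne_eq]

lemma oL_conj : oL (conj G) ↔ ¬ oR G :=
  (winsF_conj G true).trans not_not.symm

lemma oR_conj : oR (conj G) ↔ ¬ oL G :=
  not_congr (winsF_conj G false)

lemma LeftEnd.add (hG : LeftEnd G) (hH : LeftEnd H) : LeftEnd (G + H) :=
  leftEnd_iff.2 (options_add_eq_empty_iff.2 ⟨leftEnd_iff.1 hG, leftEnd_iff.1 hH⟩)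

lemma LeftEnd.not_oR_conj (hG : LeftEnd G) : ¬ oR (conj G) :=
  fun h => oR_conj.1 h hG.oL

end Outcomes

section Order

variable {A U : Set Aug} {G H K X Z : Aug}

lemma geA.refl (G : Aug) : geA A G G :=
  fun _ _ => ⟨id, id⟩

lemma geA.trans (hGH : geA A G H) (hHK : geA A H K) : geA A G K :=
  fun X hX => ⟨(hGH X hX).1 ∘ (hHK X hX).1, (hGH X hX).2 ∘ (hHK X hX).2⟩

lemma equivA_iff_geA : equivA A G H ↔ geA A G H ∧ geA A H G :=
  ⟨fun h => ⟨fun X hX => ⟨(h X hX).1.2, (h X hX).2.2⟩, fun X hX => ⟨(h X hX).1.1, (h X hX).2.1⟩⟩,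
    fun h X hX => ⟨⟨(h.2 X hX).1, (h.1 X hX).1⟩, ⟨(h.2 X hX).2, (h.1 X hX).2⟩⟩⟩

lemma geA_add_comm (G H : Aug) : geA A (G + H) (H + G) :=
  fun X _ => ⟨(winsF_add_comm H G X true).1, (not_congr (winsF_add_comm H G X false)).1⟩

lemma geA.leftStrong (h : geA A G H) (hH : LeftEnd H) : LeftStrong A G :=
  fun X hX hX' => (h X hX).1 (hH.add hX').oL

lemma geA.oL_add (h : geA A G H) (hX : X ∈ A) (hL : oL (H + X)) : oL (G + X) :=
  (h X hX).1 hL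

lemma geA.oR_add (h : geA A G H) (hX : X ∈ A) (hR : oR (H + X)) : oR (G + X) :=
  (h X hX).2 hR

lemma geA.oR_mono (h : geA A G H) (h₀ : 0 ∈ A) (hR : oR H) : oR G := by
  simpa only [add_zero] using h.oR_add h₀ (by rwa [add_zero])

lemma Hereditary.options_mem (hA : Hereditary A) (hG : G ∈ A) {p : Bool}
    (hX : X ∈ G.options p) : X ∈ A := by
  cases p
  · obtain ⟨j, rfl⟩ := hX
    exact (hA G hG).2 j
  · obtain ⟨i, rfl⟩ := hX
    exact (hA G hG).1 i

lemma IsUniverse.hereditary (hU : IsUniverse U) : Hereditary U :=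
  fun G hG => ⟨hU.moveL_mem G hG, hU.moveR_mem G hG⟩

lemma IsUniverse.star_mem (hU : IsUniverse U) : star ∈ U :=
  hU.dicotic 1 1 _ _ one_pos one_pos (fun _ => hU.zero_mem) fun _ => hU.zero_mem

lemma IsUniverse.isGame_add (hU : IsUniverse U) (hG : G ∈ U) (hX : X ∈ U) : IsGame (G + X) :=
  (hU.games G hG).add (hU.games X hX)

lemma geA.add_right (h : geA U G H) (hU : IsUniverse U) (hZ : Z ∈ U) : geA U (G + Z) (H + Z) := by
  intro X hX
  simpa only [add_assoc] using h (Z + X) (hU.add_mem Z hZ X hX)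

lemma geA.add_left (h : geA U G H) (hU : IsUniverse U) (hZ : Z ∈ U) : geA U (Z + G) (Z + H) :=
  (geA_add_comm Z G).trans ((h.add_right hU hZ).trans (geA_add_comm H Z))

protected lemma geA.conj (h : geA U G H) (hU : IsUniverse U) : geA U (conj H) (conj G) := by
  intro X hX
  have hGH := h (conj X) (hU.conj_mem X hX)
  rw [← conj_conj X, ← conj_add, ← conj_add]
  simp only [outGe, oL_conj, oR_conj]
  exact ⟨mt hGH.2, mt hGH.1⟩

lemma geA_of_geA_zero_of_zero_geA (hU : IsUniverse U) (hG : G ∈ U) (hH : H ∈ U)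
    (hHX : geA U (X + H) 0) (hXG : geA U 0 (X + G)) : geA U H G := by
  have h₁ : geA U (H + X + G) G := by
    simpa only [zero_add] using ((geA_add_comm H X).trans hHX).add_right hU hG
  have h₂ : geA U H (H + X + G) := by
    simpa only [add_zero, add_assoc] using hXG.add_left hU hH
  exact h₂.trans h₁

end Order

section Separation

variable {U S T : Set Aug} {G H X : Aug}

lemma IsUniverse.exists_options_eq (hU : IsUniverse U) (hS : S.Finite) (hT : T.Finite)
    (hS₀ : S.Nonempty) (hT₀ : T.Nonempty) (hSU : S ⊆ U) (hTU : T ⊆ U) :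
    ∃ X ∈ U, X.options true = S ∧ X.options false = T := by
  obtain ⟨m, L, -, rfl⟩ := hS.fin_param
  obtain ⟨n, R, -, rfl⟩ := hT.fin_param
  exact ⟨Aug.mk m n L R false false,
    hU.dicotic m n L R (Fin.pos_iff_nonempty.2 (Set.range_nonempty_iff_nonempty.1 hS₀))
      (Fin.pos_iff_nonempty.2 (Set.range_nonempty_iff_nonempty.1 hT₀))
      (Set.range_subset_iff.1 hSU) (Set.range_subset_iff.1 hTU), rfl, rfl⟩

lemma IsUniverse.exists_oR_add_of_options (hU : IsUniverse U) (hG : G ∈ U) (hS₀ : S.Nonempty)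
    (hT₀ : T.Nonempty) (hT : T.Finite) (hSU : S ⊆ U) (hTU : T ⊆ U)
    (hS : ∀ r ∈ G.options false, ∃ s ∈ S, oR (r + s)) (hGT : ∀ t ∈ T, oL (G + t)) :
    ∃ X ∈ U, (X.options true).Nonempty ∧ X.options true ⊆ S ∧ X.options false = T ∧
      oR (G + X) := by
  obtain ⟨s₀, hs₀⟩ := hS₀
  choose! s hsS hs using hS
  have hLS : insert s₀ (s '' G.options false) ⊆ S :=
    Set.insert_subset hs₀ (Set.image_subset_iff.2 hsS)
  obtain ⟨X, hX, hXL, hXR⟩ := hU.exists_options_eq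
    (((options_finite G false).image s).insert s₀) hT (Set.insert_nonempty _ _) hT₀
    (hLS.trans hSU) hTU
  refine ⟨X, hX, hXL ▸ Set.insert_nonempty _ _, hXL ▸ hLS, hXR, ?_⟩
  refine (oR_iff (hU.isGame_add hG hX)).2 ⟨?_, forall_mem_options_add.2 ⟨fun r hr => ?_, ?_⟩⟩
  · obtain ⟨t, ht⟩ := hT₀
    exact ⟨G + t, add_mem_options_right G (hXR ▸ ht)⟩
  · have hsX : s r ∈ X.options true := hXL ▸ Or.inr ⟨r, hr, rfl⟩
    exact oL_of_mem_options (add_mem_options_right r hsX) (hs r hr)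
  · exact hXR ▸ hGT

lemma exists_oL_add_of_options (h₀ : 0 ∈ U)
    (h : ∀ g ∈ G.options true, ∃ X ∈ U, oR (g + X)) : ∃ X ∈ U, oL (G + X) := by
  by_cases hG : LeftEnd G
  · exact ⟨0, h₀, by simpa only [add_zero] using hG.oL⟩
  · obtain ⟨g, hg⟩ := Set.nonempty_iff_ne_empty.2 (mt leftEnd_iff.2 hG)
    obtain ⟨X, hX, hgX⟩ := h g hg
    exact ⟨X, hX, oL_of_mem_options (add_mem_options_left hg X) hgX⟩

lemma IsUniverse.exists_oR_add (hU : IsUniverse U) (hG : G ∈ U) : ∃ X ∈ U, oR (G + X) := by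
  induction G using options_induction with
  | ind G ih =>
    obtain ⟨t, ht, hGt⟩ := exists_oL_add_of_options hU.zero_mem fun g hg =>
      ih true g hg (hU.hereditary.options_mem hG hg)
    obtain ⟨X, hX, -, -, -, hGX⟩ := hU.exists_oR_add_of_options (T := {t}) hG ⟨0, hU.zero_mem⟩
      (Set.singleton_nonempty t) (Set.finite_singleton t) subset_rfl
      (Set.singleton_subset_iff.2 ht) (fun r hr => ih false r hr (hU.hereditary.options_mem hG hr))
      fun _ h => h ▸ hGt
    exact ⟨X, hX, hGX⟩

lemma IsUniverse.exists_oL_add (hU : IsUniverse U) (hG : G ∈ U) : ∃ X ∈ U, oL (G + X) :=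
  exists_oL_add_of_options hU.zero_mem fun _ hg =>
    hU.exists_oR_add (hU.hereditary.options_mem hG hg)

lemma IsUniverse.exists_not_oR_add (hU : IsUniverse U) (hG : G ∈ U) :
    ∃ X ∈ U, ¬ oR (G + X) := by
  obtain ⟨X, hX, hGX⟩ := hU.exists_oL_add (hU.conj_mem G hG)
  refine ⟨conj X, hU.conj_mem X hX, ?_⟩
  rwa [← oL_conj, conj_add, conj_conj]

lemma geA_iff_forall_oR (hU : IsUniverse U) (hH : H ∈ U) :
    geA U G H ↔ ∀ X ∈ U, oR (H + X) → oR (G + X) := by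
  refine ⟨fun h X hX => h.oR_add hX, fun h X hX => ⟨fun hHX => ?_, h X hX⟩⟩
  obtain ⟨Y, hY, -, -, hYR, hHY⟩ := hU.exists_oR_add_of_options (T := {X}) hH ⟨0, hU.zero_mem⟩
    (Set.singleton_nonempty X) (Set.finite_singleton X) subset_rfl (Set.singleton_subset_iff.2 hX)
    (fun r hr => hU.exists_oR_add (hU.hereditary.options_mem hH hr)) fun _ ht => ht ▸ hHX
  have hXY : X ∈ Y.options false := hYR ▸ Set.mem_singleton X
  exact (h Y hY hHY).oL_of_mem_options (add_mem_options_right G hXY)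

lemma geA_iff_forall_oL (hU : IsUniverse U) (hG : G ∈ U) :
    geA U G H ↔ ∀ X ∈ U, oL (H + X) → oL (G + X) := by
  refine ⟨fun h X hX => h.oL_add hX, fun h => ?_⟩
  have hconj : geA U (conj H) (conj G) := by
    refine (geA_iff_forall_oR hU (hU.conj_mem G hG)).2 fun X hX => ?_
    rw [← conj_conj X, ← conj_add, ← conj_add, oR_conj, oR_conj]
    exact mt (h (conj X) (hU.conj_mem X hX))
  simpa only [conj_conj] using hconj.conj hU

end Separation

section Maintenance

variable {A U : Set Aug} {G H X : Aug}

/-- The Left half of the maintenance property for `G ≥_A H`: every Left option of `H` is dominated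
by a Left option of `G` or has a Right option that is at most `G`. -/
def LeftMaintenance (A : Set Aug) (G H : Aug) : Prop :=
  ∀ l ∈ H.options true,
    (∃ g ∈ G.options true, geA A g l) ∨ ∃ r ∈ l.options false, geA A G r

/-- The Right half of the maintenance property for `G ≥_A H`: every Right option of `G` dominates
a Right option of `H` or has a Left option that is at least `H`. -/
def RightMaintenance (A : Set Aug) (G H : Aug) : Prop :=
  ∀ r ∈ G.options false,
    (∃ h ∈ H.options false, geA A r h) ∨ ∃ l ∈ r.options true, geA A l H

/-- If a Left option `l` of `H` violates the property, then a suitable `X` separates `G` from `H`: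
Left wins `H + X` by moving to `l`, while every Left option of `X` loses with `G` and every
Left option of `G` loses to some Right option of `X`. -/
theorem geA.leftMaintenance (h : geA U G H) (hU : IsUniverse U) (hG : G ∈ U) (hH : H ∈ U) :
    LeftMaintenance U G H := by
  intro l hl
  have hlU := hU.hereditary.options_mem hH hl
  by_contra! hne
  obtain ⟨hgl, hGr⟩ := hne
  have hsep : ∀ g ∈ G.options true, ∃ t ∈ U, oL (l + t) ∧ ¬ oL (g + t) := fun g hg => by
    simpa only [geA_iff_forall_oL hU (hU.hereditary.options_mem hG hg), not_forall, exists_prop]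
      using hgl g hg
  have hS : ∀ r ∈ l.options false, ∃ s ∈ {s ∈ U | ¬ oR (G + s)}, oR (r + s) := fun r hr => by
    have hGr := hGr r hr
    rw [geA_iff_forall_oR hU (hU.hereditary.options_mem hlU hr)] at hGr
    push Not at hGr
    obtain ⟨s, hs, hrs, hGs⟩ := hGr
    exact ⟨s, ⟨hs, hGs⟩, hrs⟩
  choose! t htU hlt hgt using hsep
  obtain ⟨t₀, ht₀U, hlt₀⟩ := hU.exists_oL_add hlU
  obtain ⟨X, hX, hXL₀, hXL, hXR, hlX⟩ := hU.exists_oR_add_of_options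
    (T := insert t₀ (t '' G.options true)) hlU (hU.exists_not_oR_add hG)
    (Set.insert_nonempty _ _) (((options_finite G true).image t).insert t₀) (Set.sep_subset _ _)
    (Set.insert_subset ht₀U (Set.image_subset_iff.2 htU)) hS
    (Set.forall_mem_insert.2 ⟨hlt₀, Set.forall_mem_image.2 hlt⟩)
  have hGX : oL (G + X) := h.oL_add hX (oL_of_mem_options (add_mem_options_left hl X) hlX)
  rw [oL_iff (hU.isGame_add hG hX), options_add_eq_empty_iff, exists_mem_options_add] at hGX
  obtain ⟨-, hX₀⟩ | ⟨g, hg, hgX⟩ | ⟨s, hs, hGs⟩ := hGX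
  · exact hXL₀.ne_empty hX₀
  · have htX : t g ∈ X.options false := hXR ▸ Or.inr ⟨g, hg, rfl⟩
    exact hgt g hg (hgX.oL_of_mem_options (add_mem_options_right g htX))
  · exact (hXL hs).2 hGs

lemma oL_add_of_maintenance (hH : IsGame H) (hXG : IsGame X) (hX : X ∈ A)
    (hstrong : LeftEnd H → LeftStrong A G) (hmaint : LeftMaintenance A G H)
    (ih : ∀ x ∈ X.options true, oR (H + x) → oR (G + x)) (hHX : oL (H + X)) : oL (G + X) := by
  rw [oL_iff (hH.add hXG), options_add_eq_empty_iff, exists_mem_options_add] at hHX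
  obtain ⟨hH₀, hX₀⟩ | ⟨l, hl, hlX⟩ | ⟨x, hx, hHx⟩ := hHX
  · exact hstrong (leftEnd_iff.2 hH₀) X hX (leftEnd_iff.2 hX₀)
  · obtain ⟨g, hg, hgl⟩ | ⟨r, hr, hGr⟩ := hmaint l hl
    · exact oL_of_mem_options (add_mem_options_left hg X) (hgl.oR_add hX hlX)
    · exact hGr.oL_add hX (hlX.oL_of_mem_options (add_mem_options_left hr X))
  · exact oL_of_mem_options (add_mem_options_right G hx) (ih x hx hHx)

lemma oR_add_of_maintenance (hG : IsGame G) (hXG : IsGame X) (hX : X ∈ A)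
    (hstrong : RightEnd G → RightStrong A H) (hmaint : RightMaintenance A G H)
    (ih : ∀ x ∈ X.options false, oL (H + x) → oL (G + x)) (hHX : oR (H + X)) : oR (G + X) := by
  refine (oR_iff (hG.add hXG)).2 ⟨?_, forall_mem_options_add.2 ⟨fun r hr => ?_, ?_⟩⟩
  · refine Set.nonempty_iff_ne_empty.2 fun h₀ => ?_
    obtain ⟨hG₀, hX₀⟩ := options_add_eq_empty_iff.1 h₀
    exact hHX (hstrong (rightEnd_iff.2 hG₀) X hX (rightEnd_iff.2 hX₀))
  · obtain ⟨h, hh, hrh⟩ | ⟨l, hl, hlH⟩ := hmaint r hr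
    · exact hrh.oL_add hX (hHX.oL_of_mem_options (add_mem_options_left hh X))
    · exact oL_of_mem_options (add_mem_options_left hl X) (hlH.oR_add hX hHX)
  · exact fun x hx => ih x hx (hHX.oL_of_mem_options (add_mem_options_right H hx))

theorem geA_of_maintenance (hA : Hereditary A) (hgames : ∀ X ∈ A, IsGame X) (hG : IsGame G)
    (hH : IsGame H) (hLstrong : LeftEnd H → LeftStrong A G)
    (hRstrong : RightEnd G → RightStrong A H) (hL : LeftMaintenance A G H)
    (hR : RightMaintenance A G H) : geA A G H := by
  intro X hX
  induction X using options_induction with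
  | ind X ih =>
    exact ⟨oL_add_of_maintenance hH (hgames X hX) hX hLstrong hL
        fun x hx => (ih true x hx (hA.options_mem hX hx)).2,
      oR_add_of_maintenance hG (hgames X hX) hX hRstrong hR
        fun x hx => (ih false x hx (hA.options_mem hX hx)).1⟩

end Maintenance

section Starkillers

variable {U : Set Aug}

lemma starkiller_iff {G : Aug} :
    Starkiller G ↔
      ∃ r ∈ G.options false, ¬ oR r ∧ ∀ l ∈ r.options true, ¬ oL l ∨ Starkiller l := by
  rw [Starkiller]
  simp only [options, oL, oR, not_not, Set.exists_range_iff, Set.forall_mem_range]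

lemma oL_star_add {X : Aug} (hX : IsGame X) :
    oL (star + X) ↔ oR X ∨ ∃ x ∈ X.options true, oR (star + x) := by
  rw [oL_iff (isGame_star.add hX), options_add_eq_empty_iff, exists_mem_options_add]
  simp only [options_star, Set.singleton_ne_empty, false_and, false_or, Set.mem_singleton_iff,
    exists_eq_left, zero_add]

lemma oR_star_add {X : Aug} (hX : IsGame X) :
    oR (star + X) ↔ oL X ∧ ∀ x ∈ X.options false, oL (star + x) := by
  rw [oR_iff (isGame_star.add hX), Set.nonempty_iff_ne_empty, ne_eq, options_add_eq_empty_iff,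
    forall_mem_options_add]
  simp only [options_star, Set.singleton_ne_empty, false_and, not_false_eq_true, true_and,
    Set.mem_singleton_iff, forall_eq, zero_add]

theorem oR_star_add_iff_not_starkiller {X : Aug} (hX : IsGame X) :
    oR (star + X) ↔ oL X ∧ ¬ Starkiller X := by
  have hmove : ∀ x ∈ X.options false,
      (oL (star + x) ↔ oR x ∨ ∃ l ∈ x.options true, oL l ∧ ¬ Starkiller l) := by
    intro x hx
    have hxG := hX.of_mem_options hx
    rw [oL_star_add hxG]
    exact or_congr_right (exists_congr fun l => and_congr_right fun hl =>
      oR_star_add_iff_not_starkiller (hxG.of_mem_options hl))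
  rw [oR_star_add hX, starkiller_iff]
  push Not
  exact and_congr_right fun _ => forall₂_congr fun x hx => (hmove x hx).trans or_iff_not_imp_left
termination_by birthday X
decreasing_by
  exact (birthday_lt_of_mem_options hl).trans (birthday_lt_of_mem_options hx)

theorem leftStrong_star_add_star_iff (hU : IsUniverse U) :
    LeftStrong U (star + star) ↔ ∀ X ∈ U, LeftEnd X → ¬ Starkiller X := by
  refine forall₃_congr fun X hX hend => ?_
  have hXG := hU.games X hX
  have hmove : oL (star + (star + X)) ↔ oR (star + X) := by
    rw [oL_star_add (isGame_star.add hXG), exists_mem_options_add]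
    simp only [options_star, leftEnd_iff.1 hend, Set.mem_singleton_iff, Set.mem_empty_iff_false,
      exists_eq_left, false_and, exists_false, or_false, zero_add, or_self]
  rw [← oL, add_assoc, hmove, oR_star_add_iff_not_starkiller hXG, and_iff_right hend.oL]

end Starkillers

section Invertibility

variable {U : Set Aug}

lemma maintenance_of_zero_geA_star_add {G : Aug} (hU : IsUniverse U) (hG : G ∈ U)
    (h : geA U 0 (star + G)) :
    (∃ r ∈ G.options false, geA U 0 r) ∧
      ∀ l ∈ G.options true, geA U 0 l ∨ ∃ r ∈ l.options false, geA U 0 (star + r) := by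
  have hrev : ∀ l ∈ (star + G).options true, ∃ r ∈ l.options false, geA U 0 r := by
    intro l hl
    have hm := h.leftMaintenance hU hU.zero_mem (hU.add_mem _ hU.star_mem G hG) l hl
    simpa only [options_zero, Set.mem_empty_iff_false, false_and, exists_false, false_or] using hm
  simpa only [forall_mem_options_add, exists_mem_options_add, options_star, options_zero,
    Set.mem_singleton_iff, Set.mem_empty_iff_false, forall_eq, exists_eq_left, false_and,
    exists_false, false_or, zero_add] using hrev

lemma star_geA_of_zero_geA_star_add {G : Aug} (hU : IsUniverse U)
    (hend : ∀ K ∈ U, LeftEnd K → ¬ geA U 0 (star + K)) (hG : G ∈ U) (h : geA U 0 (star + G)) :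
    geA U star G := by
  obtain ⟨hright, hleft⟩ := maintenance_of_zero_geA_star_add hU hG h
  refine geA_of_maintenance hU.hereditary hU.games isGame_star (hU.games G hG)
    (fun hGend => absurd h (hend G hG hGend)) (fun hstar => absurd hstar one_ne_zero)
    (fun l hl => ?_) ?_
  · refine (hleft l hl).imp (fun hl₀ => ⟨0, by simp, hl₀⟩) ?_
    rintro ⟨r, hr, hr₀⟩
    have hrU := hU.hereditary.options_mem (hU.hereditary.options_mem hG hl) hr
    exact ⟨r, hr, star_geA_of_zero_geA_star_add hU hend hrU hr₀⟩
  · simpa only [RightMaintenance, options_star, Set.mem_singleton_iff, forall_eq]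
      using Or.inl hright
termination_by birthday G
decreasing_by
  exact (birthday_lt_of_mem_options hr).trans (birthday_lt_of_mem_options hl)

lemma not_oL_star_add_add {G X : Aug} (hU : IsUniverse U) (hX : X ∈ U) (hend : LeftEnd X)
    (hstar : ¬ oR (star + X)) (hbelow : ∀ G ∈ U, geA U 0 (star + G) → ¬ oR (G + X))
    (hG : G ∈ U) (h : geA U 0 (star + G)) : ¬ oL (star + G + X) := by
  rw [add_assoc, oL_star_add (hU.isGame_add hG hX), exists_mem_options_add]
  simp only [leftEnd_iff.1 hend, Set.mem_empty_iff_false, false_and, exists_false, or_false]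
  rintro (h₀ | ⟨g, hg, hgX⟩)
  · exact hbelow G hG h h₀
  · rw [← add_assoc] at hgX
    obtain hg₀ | ⟨r, hr, hr₀⟩ := (maintenance_of_zero_geA_star_add hU hG h).2 g hg
    · have hle : geA U star (star + g) := by
        simpa only [add_zero] using hg₀.add_left hU hU.star_mem
      exact hstar (hle.oR_add hX hgX)
    · have hrU := hU.hereditary.options_mem (hU.hereditary.options_mem hG hg) hr
      exact not_oL_star_add_add hU hX hend hstar hbelow hrU hr₀
        (hgX.oL_of_mem_options (add_mem_options_left (add_mem_options_right star hr) X))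
termination_by birthday G
decreasing_by
  exact (birthday_lt_of_mem_options hr).trans (birthday_lt_of_mem_options hg)

/-- If `* + K ≤ 0`, then `* + conj K ≥ 0`, so `G ≤ conj K` whenever `* + G ≤ 0`. Hence `G + K` is at
most the Right end `conj (K + K)`, which Right wins moving first. -/
lemma not_zero_geA_star_add_of_leftEnd {G K : Aug} (hU : IsUniverse U) (hG : G ∈ U)
    (h₁ : geA U (star + G) 0) (h₂ : geA U 0 (star + G)) (hK : K ∈ U) (hend : LeftEnd K) :
    ¬ geA U 0 (star + K) := by
  intro hK₀
  have hKc := hU.conj_mem K hK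
  have hconj : geA U (star + conj K) 0 := by
    simpa only [conj_add, conj_star, conj_zero] using hK₀.conj hU
  have hle : ∀ G ∈ U, geA U 0 (star + G) → geA U (conj K) G := fun G hG =>
    geA_of_geA_zero_of_zero_geA hU hG hKc hconj
  have hstar : ¬ oR (star + K) := fun hR =>
    RightEnd.not_oR (G := 0) rfl (hK₀.oR_mono hU.zero_mem hR)
  have hbelow : ∀ G ∈ U, geA U 0 (star + G) → ¬ oR (G + K) := by
    intro G hG hG₀ hR
    have hGK : geA U (conj (K + K)) (G + K) := by
      rw [conj_add]
      exact ((hle K hK hK₀).add_left hU hKc).trans ((hle G hG hG₀).add_right hU hK)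
    exact (hend.add hend).not_oR_conj (hGK.oR_mono hU.zero_mem hR)
  refine not_oL_star_add_add hU hK hend hstar hbelow hG h₂ (h₁.oL_add hK ?_)
  simpa only [zero_add] using hend.oL

theorem invertible_star_iff_leftStrong (hU : IsUniverse U) :
    Invertible U star ↔ LeftStrong U (star + star) := by
  constructor
  · rintro ⟨H, hH, hinv⟩
    obtain ⟨hge, hle⟩ := equivA_iff_geA.1 hinv
    have hstar : geA U star H := star_geA_of_zero_geA_star_add hU
      (fun K hK hend => not_zero_geA_star_add_of_leftEnd hU hH hge hle hK hend) hH hle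
    exact ((hstar.add_left hU hU.star_mem).trans hge).leftStrong rfl
  · intro hstrong
    have hge : geA U (star + star) 0 := by
      refine geA_of_maintenance hU.hereditary hU.games (isGame_star.add isGame_star)
        isGame_zero (fun _ => hstrong) (fun h => absurd h two_ne_zero) ?_ ?_
      · simp [LeftMaintenance]
      · simpa [RightMaintenance, forall_mem_options_add] using geA.refl 0
    have hle : geA U 0 (star + star) := by
      simpa only [conj_add, conj_star, conj_zero] using hge.conj hU
    exact ⟨star, hU.star_mem, equivA_iff_geA.2 ⟨hge, hle⟩⟩

end Invertibility

end Aug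

/-- `*` is `U`-invertible iff `U` contains no Left end that is a
starkiller. -/
theorem stmt16 (U : Set Aug) (hU : Aug.IsUniverse U) :
    Aug.Invertible U Aug.star ↔
      ∀ X ∈ U, Aug.LeftEnd X → ¬ Aug.Starkiller X :=
  (Aug.invertible_star_iff_leftStrong hU).trans (Aug.leftStrong_star_add_star_iff hU)
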